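/- Let p be a prime, let L be an even positive-definite lattice of rank n₀ ≥ 1 and level p, let β₀ be an integer, and let φ be a weakly holomorphic Jacobi form of weight 0 and index L having p-reflective singular support with multiplicity β₀. Then f(0,0) = 2k, where k = β₀·[12 + |R(L)|·(12/n₀ − 1/2)] + (12/(p·n₀) − 1/2)·Σ_{s ∈ L^∨, (s,s) = 2/p} f(0,s). -/

import Mathlib

/-!
The singular support condition forces `φ = β₀ q⁻¹ + ∑ f(0,l) ζ^l + O(q)`, where the `q⁰`-term
involves only `l = 0`, the `2`-roots (with coefficient `β₀`) and dual vectors of norm `2/p`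
(`PReflective.cases_zero`, `sum_split`).

For a fixed vector `v`, restrict `φ` to the line `z = w v` and take the second Taylor coefficient
at `w = 0`. Up to a constant it is `D₂ = ∑ f(m,l) (l,v)² q^m`, and the Jacobi transformation law
under `S` says that `D₂ - ((v,v)/12) E₂ φ(τ,0)` has weight `2` on the upper half-plane, the
quasi-modularity of `E₂` cancelling that of `D₂`. A holomorphic function of weight `2` with a
convergent `q`-series has vanishing constant term: its primitive on a disc about `i` is invariant
under `τ ↦ -1/τ`, because the defect is constant and vanishes at `i`, and hence takes equal values
at `ρ = exp(2πi/3)` and `ρ + 1 = -1/ρ` (`integral_weight_two_eq_zero`). Since `E₂ = 1 - 24 q + ⋯`,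
the constant term is computed as
`12 ∑ f(0,l) (l,v)² = (v,v) (∑ f(0,l) - 24 β₀)` (`second_moment`, `second_moment_form`).

This is an identity of quadratic forms in `v`; its trace with respect to the inverse Gram matrix is
`12 ∑ f(0,l) (l,l) = n₀ (∑ f(0,l) - 24 β₀)` (`EvenLattice.trace_second_moment`). Splitting both
sums by the norm of `l` and solving for `f(0,0)` gives the formula.
-/

noncomputable section

open Matrix Complex

/-- The complex upper half-plane, as a subset of `ℂ`. -/
def UH : Set ℂ := {τ : ℂ | 0 < τ.im}

/-- An even positive-definite lattice of rank `n`, presented through its Gram matrix: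
the underlying free `ℤ`-module is `Fin n → ℤ`, the bilinear form is
`(x, y) = x ⬝ᵥ (G *ᵥ y)`. -/
structure EvenLattice (n : ℕ) where
  /-- the Gram matrix -/
  G : Matrix (Fin n) (Fin n) ℤ
  symm : G.IsSymm
  even_diag : ∀ i, 2 ∣ G i i
  posdef : ∀ x : Fin n → ℤ, x ≠ 0 → 0 < x ⬝ᵥ (G *ᵥ x)

namespace EvenLattice

variable {n : ℕ}

/-- The bilinear form, extended `ℚ`-bilinearly to `L ⊗ ℚ = Fin n → ℚ`. -/
def bq (L : EvenLattice n) (x y : Fin n → ℚ) : ℚ :=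
  x ⬝ᵥ ((L.G.map (Int.cast : ℤ → ℚ)) *ᵥ y)

/-- The bilinear form, extended `ℂ`-bilinearly to `L ⊗ ℂ = Fin n → ℂ`. -/
def bc (L : EvenLattice n) (x y : Fin n → ℂ) : ℂ :=
  x ⬝ᵥ ((L.G.map (Int.cast : ℤ → ℂ)) *ᵥ y)

/-- `x ∈ L ⊗ ℚ` is a lattice vector, i.e. has integral coordinates. -/
def IsIntVec (L : EvenLattice n) (x : Fin n → ℚ) : Prop := ∀ i, ∃ m : ℤ, x i = m

/-- `x` lies in the dual lattice `L^∨`. -/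
def InDual (L : EvenLattice n) (x : Fin n → ℚ) : Prop :=
  ∀ l : Fin n → ℚ, L.IsIntVec l → ∃ m : ℤ, L.bq x l = m

/-- `L` is unimodular, i.e. `L^∨ = L`. -/
def Unimodular (L : EvenLattice n) : Prop :=
  ∀ x : Fin n → ℚ, L.InDual x → L.IsIntVec x

/-- The number `|R(L)|` of `2`-roots of `L`, i.e. of vectors `r ∈ L` with `(r,r) = 2`. -/
def rootCount (L : EvenLattice n) : ℕ :=
  Nat.card {r : Fin n → ℚ // L.IsIntVec r ∧ L.bq r r = 2}

end EvenLattice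

/-- A weakly holomorphic Jacobi form of weight `k` and index `L`, recorded together with the
system of its Fourier coefficients `coef`. -/
structure WeakJacobiForm {n : ℕ} (L : EvenLattice n) (k : ℤ) where
  /-- the underlying function on `ℍ × (L ⊗ ℂ)` -/
  toFun : ℂ → (Fin n → ℂ) → ℂ
  /-- the Fourier coefficients `f(n, l)` -/
  coef : ℤ → (Fin n → ℚ) → ℂ
  holo : DifferentiableOn ℂ (fun p : ℂ × (Fin n → ℂ) => toFun p.1 p.2)
    (UH ×ˢ (Set.univ : Set (Fin n → ℂ)))
  modular : ∀ a b c d : ℤ, a * d - b * c = 1 → ∀ τ ∈ UH, ∀ z : Fin n → ℂ,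
    toFun (((a : ℂ) * τ + b) / ((c : ℂ) * τ + d)) (fun i => z i / ((c : ℂ) * τ + d)) =
      ((c : ℂ) * τ + d) ^ k *
        Complex.exp ((Real.pi : ℂ) * Complex.I * c * L.bc z z / ((c : ℂ) * τ + d)) * toFun τ z
  elliptic : ∀ x y : Fin n → ℚ, L.IsIntVec x → L.IsIntVec y → ∀ τ ∈ UH, ∀ z : Fin n → ℂ,
    toFun τ (fun i => z i + (x i : ℂ) * τ + (y i : ℂ)) =
      Complex.exp (-((Real.pi : ℂ) * Complex.I) *
        ((L.bq x x : ℂ) * τ + 2 * L.bc (fun i => (x i : ℂ)) z)) * toFun τ z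
  coef_bdd : ∃ n₁ : ℤ, ∀ m : ℤ, ∀ l : Fin n → ℚ, m < n₁ → coef m l = 0
  coef_dual : ∀ (m : ℤ) (l : Fin n → ℚ), coef m l ≠ 0 → L.InDual l
  coef_finite : ∀ m : ℤ, {l : Fin n → ℚ | coef m l ≠ 0}.Finite
  expansion : ∀ τ ∈ UH, ∀ z : Fin n → ℂ,
    HasSum (fun p : ℤ × (Fin n → ℚ) =>
      coef p.1 p.2 * Complex.exp (2 * (Real.pi : ℂ) * Complex.I *
        ((p.1 : ℂ) * τ + L.bc (fun i => (p.2 i : ℂ)) z))) (toFun τ z)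

/-- `L` has level `N`: `N` is the smallest positive integer such that `N·(s,s) ∈ 2ℤ`
for all `s ∈ L^∨`. -/
def HasLevel {n : ℕ} (L : EvenLattice n) (N : ℕ) : Prop :=
  0 < N ∧ (∀ s : Fin n → ℚ, L.InDual s → ∃ t : ℤ, (N : ℚ) * L.bq s s = 2 * t) ∧
    ∀ M : ℕ, 0 < M → (∀ s : Fin n → ℚ, L.InDual s → ∃ t : ℤ, (M : ℚ) * L.bq s s = 2 * t) →
      N ≤ M

/-- `φ` (a weakly holomorphic Jacobi form of weight `0` and index `L`) has `p`-reflective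
singular support with multiplicity `β₀`: its Fourier coefficients satisfy `f(n,l) = 0`
whenever `2n − (l,l) < 0`, except that `f(n,l) = β₀` whenever `2n − (l,l) = −2` and `l ∈ L`,
while `f(n,l)` is a non-negative integer depending only on the coset `l + L` whenever
`2n − (l,l) = −2/p`. -/
def PReflective {n : ℕ} {L : EvenLattice n} (p : ℕ) (φ : WeakJacobiForm L 0)
    (β₀ : ℤ) : Prop :=
  (∀ (m : ℤ) (l : Fin n → ℚ), 2 * (m : ℚ) - L.bq l l = -2 → L.IsIntVec l →
      φ.coef m l = β₀) ∧
  (∀ (m : ℤ) (l : Fin n → ℚ), 2 * (m : ℚ) - L.bq l l = -(2 / (p : ℚ)) →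
      ∃ t : ℕ, φ.coef m l = t) ∧
  (∀ (m m' : ℤ) (l l' : Fin n → ℚ), 2 * (m : ℚ) - L.bq l l = -(2 / (p : ℚ)) →
      2 * (m' : ℚ) - L.bq l' l' = -(2 / (p : ℚ)) → L.IsIntVec (l - l') →
      φ.coef m l = φ.coef m' l') ∧
  (∀ (m : ℤ) (l : Fin n → ℚ), 2 * (m : ℚ) - L.bq l l < 0 →
      ¬(2 * (m : ℚ) - L.bq l l = -2 ∧ L.IsIntVec l) →
      2 * (m : ℚ) - L.bq l l ≠ -(2 / (p : ℚ)) →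
      φ.coef m l = 0)

/-! ### Absolutely convergent `q`-series -/

/-- The monomial `τ ↦ q^m`, `q = exp(2πiτ)`. -/
def qpow (m : ℤ) (τ : ℂ) : ℂ := Complex.exp (2 * (Real.pi : ℂ) * Complex.I * ((m : ℂ) * τ))

lemma norm_qpow (m : ℤ) (τ : ℂ) : ‖qpow m τ‖ = Real.exp (-2 * Real.pi * m * τ.im) := by
  rw [qpow, Complex.norm_exp]
  congr 1
  simp
  ring

lemma qpow_add (m k : ℤ) (τ : ℂ) : qpow (m + k) τ = qpow m τ * qpow k τ := by
  rw [qpow, qpow, qpow, ← Complex.exp_add]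
  congr 1
  push_cast
  ring

lemma norm_qpow_add_real (m : ℤ) (τ : ℂ) (x : ℝ) : ‖qpow m (τ + x)‖ = ‖qpow m τ‖ := by
  simp [norm_qpow]

lemma differentiable_qpow (m : ℤ) : Differentiable ℂ (qpow m) := by
  unfold qpow
  fun_prop

lemma qpow_zero (τ : ℂ) : qpow 0 τ = 1 := by simp [qpow]

lemma qpow_add_one (m : ℤ) (τ : ℂ) : qpow m (τ + 1) = qpow m τ := by
  rw [qpow, qpow, Complex.exp_eq_exp_iff_exists_int]
  exact ⟨m, by ring⟩

lemma integral_qpow (m : ℤ) (τ : ℂ) :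
    ∫ x in (0 : ℝ)..1, qpow m (τ + x) = if m = 0 then 1 else 0 := by
  split_ifs with hm
  · subst hm
    simp [qpow_zero]
  · have hc : (2 * (Real.pi : ℂ) * Complex.I * m) ≠ 0 := by
      simp [Real.pi_ne_zero, hm]
    have hd : ∀ x ∈ Set.uIcc (0 : ℝ) 1, HasDerivAt
        (fun y : ℝ => qpow m (τ + y) / (2 * (Real.pi : ℂ) * Complex.I * m))
        (qpow m (τ + x)) x := by
      intro x _
      have h1 : HasDerivAt (fun y : ℂ => qpow m (τ + y) / (2 * (Real.pi : ℂ) * Complex.I * m))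
          (qpow m (τ + x)) (x : ℂ) := by
        unfold qpow
        have h2 : HasDerivAt (fun y : ℂ => 2 * (Real.pi : ℂ) * Complex.I * ((m : ℂ) * (τ + y)))
            (2 * (Real.pi : ℂ) * Complex.I * ((m : ℂ) * 1)) (x : ℂ) :=
          (((hasDerivAt_id _).const_add τ).const_mul _).const_mul _
        convert! h2.cexp.div_const (2 * (Real.pi : ℂ) * Complex.I * m) using 1
        field_simp
      exact h1.comp_ofReal
    rw [intervalIntegral.integral_eq_sub_of_hasDerivAt hd]
    · have := qpow_add_one m τ
      simp [this]
    · apply Continuous.intervalIntegrable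
      exact (differentiable_qpow m).continuous.comp (by fun_prop)

/-- Absolutely convergent `q`-series may be integrated termwise along a horizontal segment, because
`|q^m|` is constant there. -/
lemma hasSum_integral_qpow {ι : Type*} [Countable ι] (b : ι → ℂ) (M : ι → ℤ) (τ : ℂ) (h : ℝ → ℂ)
    (hs : ∀ x : ℝ, HasSum (fun p => b p * qpow (M p) (τ + x)) (h x)) (ψ : ℝ → ℂ)
    (hψ : Continuous ψ) :
    HasSum (fun p => b p * ∫ x in (0 : ℝ)..1, qpow (M p) (τ + x) * ψ x)
      (∫ x in (0 : ℝ)..1, h x * ψ x) := by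
  have hcont : ∀ p, Continuous fun x : ℝ => qpow (M p) (τ + x) := fun p =>
    (differentiable_qpow _).continuous.comp (by fun_prop)
  have hsum : Summable fun p => ‖b p * qpow (M p) τ‖ := by
    simpa using (hs 0).summable.norm
  simp_rw [← intervalIntegral.integral_const_mul]
  refine intervalIntegral.hasSum_integral_of_dominated_convergence
    (fun p x => ‖b p * qpow (M p) τ‖ * ‖ψ x‖) ?_ ?_ ?_ ?_ ?_
  · intro p
    exact (continuous_const.mul ((hcont p).mul hψ)).aestronglyMeasurable
  · intro p
    refine Filter.Eventually.of_forall fun x _ => ?_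
    rw [norm_mul, norm_mul, norm_mul, norm_qpow_add_real, mul_assoc]
  · exact Filter.Eventually.of_forall fun x _ => hsum.mul_right _
  · apply Continuous.intervalIntegrable
    simp_rw [tsum_mul_right]
    exact continuous_const.mul hψ.norm
  · refine Filter.Eventually.of_forall fun x _ => ?_
    simpa only [mul_assoc] using (hs x).mul_right (ψ x)

lemma differentiableOn_qseries {ι : Type*} (b : ι → ℂ) (M : ι → ℤ) (h : ℂ → ℂ)
    (hs : ∀ τ ∈ UH, HasSum (fun p => b p * qpow (M p) τ) (h τ)) :
    DifferentiableOn ℂ h UH := by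
  intro τ hτ
  have hτ' : 0 < τ.im := hτ
  set U : Set ℂ := {z : ℂ | τ.im / 2 < z.im ∧ z.im < 2 * τ.im} with hU
  have hUo : IsOpen U :=
    (isOpen_lt continuous_const Complex.continuous_im).inter
      (isOpen_lt Complex.continuous_im continuous_const)
  have hUs : U ⊆ UH := fun z hz => lt_trans (by positivity) hz.1
  have s1 := (hs (τ / 2) (by simpa [UH] using hτ')).summable.norm
  have s2 := (hs (2 * τ) (by simpa [UH] using hτ')).summable.norm
  have key := differentiableOn_tsum_of_summable_norm (F := fun p z => b p * qpow (M p) z)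
    (s1.add s2) (fun p => ((differentiable_qpow (M p)).const_mul _).differentiableOn) hUo ?_
  · have hd : DifferentiableOn ℂ h U :=
      key.congr fun z hz => ((hs z (hUs hz)).tsum_eq).symm
    exact ((hd τ ⟨by linarith, by linarith⟩).differentiableAt
      (hUo.mem_nhds ⟨by linarith, by linarith⟩)).differentiableWithinAt
  · -- `|q^m|` is monotone in `Im τ`, so on a strip it is bounded by the sum of its edge values
    intro p z hz
    rw [norm_mul, norm_mul, norm_mul, ← mul_add]
    refine mul_le_mul_of_nonneg_left ?_ (norm_nonneg _)
    rw [norm_qpow, norm_qpow, norm_qpow]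
    have i1 : (τ / 2).im = τ.im / 2 := by simp
    have i2 : (2 * τ).im = 2 * τ.im := by simp
    rw [i1, i2]
    have hpi := Real.pi_pos
    rcases le_total 0 (M p : ℝ) with hM | hM
    · refine le_trans (Real.exp_le_exp.mpr ?_) (le_add_of_nonneg_right (Real.exp_pos _).le)
      have := mul_le_mul_of_nonneg_left hz.1.le (mul_nonneg hpi.le hM)
      linarith
    · refine le_trans (Real.exp_le_exp.mpr ?_) (le_add_of_nonneg_left (Real.exp_pos _).le)
      have := mul_le_mul_of_nonpos_left hz.2.le (mul_nonpos_of_nonneg_of_nonpos hpi.le hM)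
      linarith

/-- Termwise differentiation of an exponential series with infinite abscissa of absolute
convergence. -/
lemma hasSum_deriv_exp {ι : Type*} (b c : ι → ℂ) (f : ℂ → ℂ)
    (hb : ∀ R : ℝ, Summable fun p => ‖b p‖ * Real.exp (R * ‖c p‖))
    (hf : ∀ w, HasSum (fun p => b p * Complex.exp (w * c p)) (f w)) :
    Differentiable ℂ f ∧ (∀ R : ℝ, Summable fun p => ‖b p * c p‖ * Real.exp (R * ‖c p‖)) ∧
      ∀ w, HasSum (fun p => b p * c p * Complex.exp (w * c p)) (deriv f w) := by
  have hfe : f = fun w => ∑' p, b p * Complex.exp (w * c p) := funext fun w => (hf w).tsum_eq.symm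
  have hbound : ∀ (R : ℝ) (p : ι) (w : ℂ), w ∈ Metric.ball (0 : ℂ) R →
      ‖b p * Complex.exp (w * c p)‖ ≤ ‖b p‖ * Real.exp (R * ‖c p‖) := by
    intro R p w hw
    rw [norm_mul]
    refine mul_le_mul_of_nonneg_left ?_ (norm_nonneg _)
    refine (Complex.norm_exp_le_exp_norm _).trans (Real.exp_le_exp.mpr ?_)
    rw [norm_mul]
    exact mul_le_mul_of_nonneg_right (by simpa using (mem_ball_zero_iff.mp hw).le) (norm_nonneg _)
  have hdiff : ∀ (p : ι), Differentiable ℂ fun w => b p * Complex.exp (w * c p) := fun p => by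
    fun_prop
  have hmem : ∀ w : ℂ, w ∈ Metric.ball (0 : ℂ) (‖w‖ + 1) := fun w => by simp
  refine ⟨fun w => ?_, fun R => ?_, fun w => ?_⟩
  · rw [hfe]
    exact (differentiableOn_tsum_of_summable_norm (hb (‖w‖ + 1))
      (fun p => (hdiff p).differentiableOn) Metric.isOpen_ball (hbound _)).differentiableAt
      (Metric.isOpen_ball.mem_nhds (hmem w))
  · refine Summable.of_nonneg_of_le (fun p => by positivity) (fun p => ?_) (hb (R + 1))
    rw [norm_mul, add_mul, Real.exp_add, one_mul, mul_assoc]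
    refine mul_le_mul_of_nonneg_left ?_ (norm_nonneg _)
    rw [mul_comm]
    refine mul_le_mul_of_nonneg_left ?_ (Real.exp_pos _).le
    linarith [Real.add_one_le_exp ‖c p‖]
  · have := hasSum_deriv_of_summable_norm (hb (‖w‖ + 1))
      (fun p => (hdiff p).differentiableOn) Metric.isOpen_ball (hbound _) (hmem w)
    rw [← hfe] at this
    convert! this using 2 with p
    have h1 : HasDerivAt (fun w => b p * Complex.exp (w * c p))
        (b p * (Complex.exp (w * c p) * (1 * c p))) w :=
      (((hasDerivAt_id w).mul_const (c p)).cexp).const_mul (b p)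
    rw [h1.deriv]
    ring

/-! ### Constant terms in weight two -/

/-- The point `ρ = exp(2πi/3)`, a fixed point of `τ ↦ -1/(τ+1)`. -/
def rhoPt : ℂ := ⟨-(1 / 2), Real.sqrt 3 / 2⟩

lemma rhoPt_mem : rhoPt ∈ UH := by
  simp [rhoPt, UH]

lemma rhoPt_eq : rhoPt * (rhoPt + 1) = -1 := by
  have h3 : Real.sqrt 3 * Real.sqrt 3 = 3 := Real.mul_self_sqrt (by norm_num)
  apply Complex.ext <;> simp [rhoPt] <;> nlinarith

/-- The disc as `|z|² + 1 < (5/2) Im z`, a condition visibly stable under `z ↦ -1/z`. -/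
lemma mem_ball_iff_normSq (z : ℂ) :
    z ∈ Metric.ball (5 / 4 * Complex.I) (3 / 4) ↔ Complex.normSq z + 1 < 5 / 2 * z.im := by
  rw [mem_ball_iff_norm, ← sq_lt_sq₀ (norm_nonneg _) (by norm_num), ← Complex.normSq_eq_norm_sq,
    Complex.normSq_apply, Complex.normSq_apply]
  simp
  constructor <;> intro h <;> nlinarith

lemma neg_inv_im (z : ℂ) : (-1 / z).im = z.im / Complex.normSq z := by
  rw [neg_div, one_div, Complex.neg_im, Complex.inv_im]
  ring

lemma neg_inv_mem_UH {τ : ℂ} (hτ : τ ∈ UH) : -1 / τ ∈ UH := by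
  have h0 : 0 < τ.im := hτ
  have hτ0 : τ ≠ 0 := by rintro rfl; simp at h0
  show 0 < (-1 / τ).im
  rw [neg_inv_im]
  exact div_pos h0 (Complex.normSq_pos.mpr hτ0)

lemma neg_inv_mem_ball {z : ℂ} (hz : z ∈ Metric.ball (5 / 4 * Complex.I) (3 / 4)) :
    -1 / z ∈ Metric.ball (5 / 4 * Complex.I) (3 / 4) := by
  rw [mem_ball_iff_normSq] at *
  have him : 0 < z.im := by nlinarith [Complex.normSq_nonneg z]
  have hz0 : z ≠ 0 := by rintro rfl; simp at him
  have hn : 0 < Complex.normSq z := Complex.normSq_pos.mpr hz0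
  have h1 : Complex.normSq (-1 / z) = 1 / Complex.normSq z := by simp
  have h2 := neg_inv_im z
  rw [h1, h2, ← sub_pos]
  have : 5 / 2 * (z.im / Complex.normSq z) - (1 / Complex.normSq z + 1) =
    (5 / 2 * z.im - (Complex.normSq z + 1)) / Complex.normSq z := by
    field_simp
    ring
  rw [this]
  exact div_pos (by linarith) hn

/-- A holomorphic function on the upper half-plane with the weight `2` transformation law under `S`
has integral zero over `[ρ, ρ + 1]`; for a `q`-series this integral is the constant term. A primitive
`P` on the hyperbolic disc `ball (5i/4) (3/4)` centred at `i` is `S`-invariant, since `P ∘ S - P` is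
constant and vanishes at `i`; and `S` exchanges `ρ` and `ρ + 1`. -/
lemma integral_weight_two_eq_zero (F : ℂ → ℂ) (hF : DifferentiableOn ℂ F UH)
    (hS : ∀ τ ∈ UH, F (-1 / τ) = τ ^ 2 * F τ) :
    ∫ x in (0 : ℝ)..1, F (rhoPt + x) = 0 := by
  set B : Set ℂ := Metric.ball (5 / 4 * Complex.I) (3 / 4) with hB
  have hBU : B ⊆ UH := fun z hz => by
    have := (mem_ball_iff_normSq z).mp hz
    show 0 < z.im
    nlinarith [Complex.normSq_nonneg z]
  obtain ⟨P, hP⟩ := (hF.mono hBU).isExactOn_ball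
  have hline : ∀ x ∈ Set.Icc (0 : ℝ) 1, rhoPt + x ∈ B := by
    intro x hx
    rw [hB, mem_ball_iff_normSq]
    have h3 : Real.sqrt 3 * Real.sqrt 3 = 3 := Real.mul_self_sqrt (by norm_num)
    have h4 : (17 / 10 : ℝ) < Real.sqrt 3 := Real.lt_sqrt_of_sq_lt (by norm_num)
    simp [rhoPt, Complex.normSq_apply]
    nlinarith [hx.1, hx.2]
  have hρ : rhoPt ∈ B := by
    have := hline 0 (by simp)
    rwa [Complex.ofReal_zero, add_zero] at this
  have hI : Complex.I ∈ B := by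
    rw [hB, mem_ball_iff_normSq]; simp; norm_num
  have hderiv : ∀ z ∈ B, HasDerivAt (fun z => P (-1 / z) - P z) 0 z := by
    intro z hz
    have hz0 : z ≠ 0 := by
      rintro rfl
      simpa [UH] using hBU hz
    have h1 : HasDerivAt (fun z : ℂ => -1 / z) (1 / z ^ 2) z := by
      have := (hasDerivAt_inv hz0).const_mul (-1)
      convert! this using 1
      · ring
    have h2 := ((hP _ (neg_inv_mem_ball hz)).comp z h1).sub (hP z hz)
    convert! h2 using 1
    rw [hS z (hBU hz)]
    field_simp
    ring
  have hconst : P (-1 / rhoPt) - P rhoPt = P (-1 / Complex.I) - P Complex.I :=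
    Metric.isOpen_ball.is_const_of_deriv_eq_zero (𝕜 := ℂ) (convex_ball _ _).isPreconnected
      (fun z hz => (hderiv z hz).differentiableAt.differentiableWithinAt)
      (fun z hz => (hderiv z hz).deriv) hρ hI
  have hr0 : rhoPt ≠ 0 := by
    intro h
    simpa [h] using rhoPt_eq
  have e1 : -1 / rhoPt = rhoPt + 1 := by
    rw [div_eq_iff hr0, ← rhoPt_eq]; ring
  have e2 : -1 / Complex.I = Complex.I := by simp
  rw [e1, e2, sub_self, sub_eq_zero] at hconst
  have hd : ∀ x ∈ Set.uIcc (0 : ℝ) 1,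
      HasDerivAt (fun y : ℝ => P (rhoPt + y)) (F (rhoPt + x)) x := by
    intro x hx
    rw [Set.uIcc_of_le zero_le_one] at hx
    have h1 := (hP _ (hline x hx)).comp_const_add rhoPt (x : ℂ)
    exact h1.comp_ofReal
  rw [intervalIntegral.integral_eq_sub_of_hasDerivAt hd]
  · simp [hconst]
  · apply ContinuousOn.intervalIntegrable
    rw [Set.uIcc_of_le zero_le_one]
    exact hF.continuousOn.comp (by fun_prop) fun x hx => hBU (hline x hx)

/-! ### The Eisenstein series of weight two -/

/-- The Eisenstein series `E₂` as a function on `ℂ`; only its values on the upper half-plane are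
meaningful. -/
def eis2 (τ : ℂ) : ℂ := EisensteinSeries.E2 (UpperHalfPlane.ofComplex τ)

lemma differentiableOn_eis2 : DifferentiableOn ℂ eis2 UH :=
  UpperHalfPlane.mdifferentiable_iff.mp E2_mdifferentiable

lemma eis2_neg_inv {τ : ℂ} (hτ : τ ∈ UH) :
    eis2 (-1 / τ) = τ ^ 2 * eis2 τ - 6 * Complex.I / Real.pi * τ := by
  have h := EisensteinSeries.G2_S_transform ⟨τ, hτ⟩
  have hτ0 : τ ≠ 0 := by
    rintro rfl
    simp [UH] at hτ
  have hpi : (Real.pi : ℂ) ≠ 0 := by simp [Real.pi_ne_zero]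
  have e1 : UpperHalfPlane.ofComplex τ = ⟨τ, hτ⟩ := UpperHalfPlane.ofComplex_apply_of_im_pos hτ
  have him : 0 < (-1 / τ).im := neg_inv_mem_UH hτ
  have e2 : UpperHalfPlane.ofComplex (-1 / τ) = ModularGroup.S • (⟨τ, hτ⟩ : UpperHalfPlane) := by
    rw [UpperHalfPlane.ofComplex_apply_of_im_pos him, UpperHalfPlane.modular_S_smul]
    ext
    simp [neg_div, inv_neg]
  unfold eis2
  rw [e1, e2]
  simp only [EisensteinSeries.E2, Pi.smul_apply, smul_eq_mul, riemannZeta_two]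
  rw [h]
  field_simp
  ring_nf

lemma hasSum_eis2 {τ : ℂ} (hτ : τ ∈ UH) :
    HasSum (fun m : ℕ => (if m = 0 then 1 else -24 * (ArithmeticFunction.sigma 1 m : ℂ)) *
      qpow m τ) (eis2 τ) := by
  have h := EisensteinSeries.hasSum_qExpansion_E2 (z := ⟨τ, hτ⟩)
  rw [eis2, UpperHalfPlane.ofComplex_apply_of_im_pos hτ]
  convert! h using 2 with m
  rw [smul_eq_mul, ← Complex.exp_nat_mul, qpow]
  congr 2
  simp
  ring

/-- The constant term of `q^k E₂` for `k ≥ -1`, read off from `E₂ = 1 - 24 q + ⋯`. -/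
lemma integral_qpow_mul_eis2 {k : ℤ} (hk : -1 ≤ k) {τ : ℂ} (hτ : τ ∈ UH) :
    ∫ x in (0 : ℝ)..1, qpow k (τ + x) * eis2 (τ + x) =
      if k = 0 then 1 else if k = -1 then -24 else 0 := by
  have hmem : ∀ x : ℝ, τ + x ∈ UH := fun x => by simpa [UH] using hτ
  have h := hasSum_integral_qpow _ (fun m : ℕ => (m : ℤ)) τ (fun x => eis2 (τ + x))
    (fun x => hasSum_eis2 (hmem x)) (fun x => qpow k (τ + x))
    ((differentiable_qpow k).continuous.comp (by fun_prop))
  simp_rw [← qpow_add, integral_qpow] at h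
  simp_rw [mul_comm (qpow k _)]
  rw [← h.tsum_eq]
  -- only the term `m = -k` survives, and `-k ≤ 1`
  rcases lt_trichotomy k 0 with hk0 | hk0 | hk0
  · obtain rfl : k = -1 := by omega
    rw [tsum_eq_single 1]
    · simp
    · intro m hm
      have : (m : ℤ) + -1 ≠ 0 := by omega
      simp [this]
  · subst hk0
    rw [tsum_eq_single 0]
    · simp
    · intro m hm
      simp [hm]
  · rw [if_neg (by omega), if_neg (by omega)]
    refine (tsum_congr fun m => ?_).trans tsum_zero
    have : (m : ℤ) + k ≠ 0 := by omega
    rw [if_neg this, mul_zero]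

/-! ### The second Taylor coefficient in the elliptic variable -/

/-- The second-order consequence of the Jacobi transformation law in one elliptic variable:
`12 ∑_{m=0} a u² = Q (∑_{m=0} a - 24 ∑_{m=-1} a)`, obtained by applying
`integral_weight_two_eq_zero` to `∑ a u² q^m - (Q/12) E₂ ∑ a q^m`. -/
lemma second_moment {ι : Type*} [Countable ι] (a : ι → ℂ) (M : ι → ℤ) (u : ι → ℝ)
    (g : ℂ → ℂ → ℂ) (Q A₀ A₁ B₀ : ℂ)
    (hg : ∀ τ ∈ UH, ∀ w, HasSum (fun p => a p * Complex.exp (2 * (Real.pi : ℂ) * Complex.I *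
      ((M p : ℂ) * τ + w * u p))) (g τ w))
    (hM : ∀ p, a p ≠ 0 → -1 ≤ M p)
    (hS : ∀ τ ∈ UH, ∀ w, g (-1 / τ) (w / τ) =
      Complex.exp ((Real.pi : ℂ) * Complex.I * Q * w ^ 2 / τ) * g τ w)
    (hA₀ : HasSum (fun p => if M p = 0 then a p else 0) A₀)
    (hA₁ : HasSum (fun p => if M p = -1 then a p else 0) A₁)
    (hB₀ : HasSum (fun p => if M p = 0 then a p * (u p : ℂ) ^ 2 else 0) B₀) :
    12 * B₀ = Q * (A₀ - 24 * A₁) := by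
  have hpi : (Real.pi : ℂ) ≠ 0 := by simp [Real.pi_ne_zero]
  set c : ι → ℂ := fun p => 2 * (Real.pi : ℂ) * Complex.I * u p with hc
  have hcn : ∀ p, ‖c p‖ = 2 * Real.pi * |u p| := fun p => by
    simp [hc, abs_of_pos Real.pi_pos]
  have hg' : ∀ τ ∈ UH, ∀ w, HasSum (fun p => a p * qpow (M p) τ * Complex.exp (w * c p))
      (g τ w) := by
    intro τ hτ w
    convert! hg τ hτ w using 2 with p
    rw [mul_assoc, qpow, ← Complex.exp_add]
    congr 2
    simp only [hc]
    ring
  have hsumm : ∀ τ ∈ UH, ∀ R : ℝ,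
      Summable fun p => ‖a p * qpow (M p) τ‖ * Real.exp (R * ‖c p‖) := by
    intro τ hτ R
    -- one of the two values `|exp(w c)|`, `w = ±iR`, is `exp(R|c|)`, depending on the signs of `u`
    have s1 := (hg' τ hτ (R * Complex.I)).summable.norm
    have s2 := (hg' τ hτ (-(R * Complex.I))).summable.norm
    refine Summable.of_nonneg_of_le (fun p => by positivity) (fun p => ?_) (s1.add s2)
    rw [norm_mul _ (Complex.exp _), norm_mul _ (Complex.exp _), ← mul_add]
    refine mul_le_mul_of_nonneg_left ?_ (norm_nonneg _)
    rw [Complex.norm_exp, Complex.norm_exp, hcn]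
    have r1 : ((R : ℂ) * Complex.I * c p).re = -(2 * Real.pi * R * u p) := by
      simp [hc]; ring
    have r2 : (-((R : ℂ) * Complex.I) * c p).re = 2 * Real.pi * R * u p := by
      simp [hc]; ring
    rw [r1, r2]
    rcases le_total 0 (u p) with h | h
    · rw [abs_of_nonneg h]
      refine le_trans (le_of_eq ?_) (le_add_of_nonneg_left (Real.exp_pos _).le)
      congr 1; ring
    · rw [abs_of_nonpos h]
      refine le_trans (le_of_eq ?_) (le_add_of_nonneg_right (Real.exp_pos _).le)
      congr 1; ring
  have hD := fun τ (hτ : τ ∈ UH) =>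
    hasSum_deriv_exp _ c (g τ) (hsumm τ hτ) (hg' τ hτ)
  have hDD := fun τ (hτ : τ ∈ UH) =>
    hasSum_deriv_exp _ c (deriv (g τ)) (hD τ hτ).2.1 (hD τ hτ).2.2
  -- `D0 = ∑ a q^m` and `D2 = ∑ a u² q^m`
  set D0 : ℂ → ℂ := fun τ => g τ 0 with hD0
  set D2 : ℂ → ℂ := fun τ => deriv (deriv (g τ)) 0 / (2 * (Real.pi : ℂ) * Complex.I) ^ 2 with hD2
  have sD0 : ∀ τ ∈ UH, HasSum (fun p => a p * qpow (M p) τ) (D0 τ) := by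
    intro τ hτ
    simpa using hg' τ hτ 0
  have sD2 : ∀ τ ∈ UH, HasSum (fun p => a p * (u p : ℂ) ^ 2 * qpow (M p) τ) (D2 τ) := by
    intro τ hτ
    have := ((hDD τ hτ).2.2 0).div_const ((2 * (Real.pi : ℂ) * Complex.I) ^ 2)
    convert! this using 2 with p
    simp only [hc, zero_mul, Complex.exp_zero]
    field_simp
  have hneg : ∀ τ ∈ UH, -1 / τ ∈ UH := fun τ hτ => neg_inv_mem_UH hτ
  have tD0 : ∀ τ ∈ UH, D0 (-1 / τ) = D0 τ := by
    intro τ hτ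
    simpa using hS τ hτ 0
  have tD2 : ∀ τ ∈ UH, D2 (-1 / τ) =
      τ ^ 2 * D2 τ - Complex.I * Q / (2 * Real.pi) * τ * D0 τ := by
    intro τ hτ
    have hτ0 : τ ≠ 0 := by rintro rfl; simp [UH] at hτ
    set α : ℂ := (Real.pi : ℂ) * Complex.I * Q / τ with hα
    have d1 := fun w => ((hD τ hτ).1 w).hasDerivAt
    have d2 := fun w => ((hDD τ hτ).1 w).hasDerivAt
    have d1' := fun w => ((hD _ (hneg τ hτ)).1 w).hasDerivAt
    have d2' := fun w => ((hDD _ (hneg τ hτ)).1 w).hasDerivAt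
    have hexp : ∀ w, HasDerivAt (fun w => Complex.exp (α * w ^ 2))
        (Complex.exp (α * w ^ 2) * (2 * α * w)) w := by
      intro w
      have := ((hasDerivAt_pow 2 w).const_mul α).cexp
      convert! this using 1
      push_cast
      ring
    have hfun : (fun w => g (-1 / τ) (w / τ)) = fun w => Complex.exp (α * w ^ 2) * g τ w := by
      funext w
      rw [hS τ hτ w]
      congr 2
      rw [hα]; ring
    have l1 : ∀ w, HasDerivAt (fun w => g (-1 / τ) (w / τ))
        (deriv (g (-1 / τ)) (w / τ) * (1 / τ)) w := fun w =>
      (d1' (w / τ)).comp w ((hasDerivAt_id w).div_const τ)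
    have r1 : ∀ w, HasDerivAt (fun w => Complex.exp (α * w ^ 2) * g τ w)
        (Complex.exp (α * w ^ 2) * (2 * α * w) * g τ w +
          Complex.exp (α * w ^ 2) * deriv (g τ) w) w := fun w => (hexp w).mul (d1 w)
    have hfun1 : (fun w => deriv (g (-1 / τ)) (w / τ) * (1 / τ)) = fun w =>
        Complex.exp (α * w ^ 2) * (2 * α * w) * g τ w +
          Complex.exp (α * w ^ 2) * deriv (g τ) w := by
      funext w
      refine (l1 w).unique ?_
      rw [hfun]
      exact r1 w
    have l2 : HasDerivAt (fun w => deriv (g (-1 / τ)) (w / τ) * (1 / τ))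
        (deriv (deriv (g (-1 / τ))) (0 / τ) * (1 / τ) * (1 / τ)) 0 :=
      ((d2' (0 / τ)).comp (0 : ℂ) ((hasDerivAt_id (0 : ℂ)).div_const τ)).mul_const (1 / τ)
    rw [hfun1] at l2
    have r2 := (((hexp 0).mul ((hasDerivAt_id (0 : ℂ)).const_mul (2 * α))).mul (d1 0)).add
      ((hexp 0).mul (d2 0))
    have := l2.unique r2
    simp at this
    simp only [hD2, hD0]
    have e : deriv (deriv (g (-1 / τ))) 0 = τ ^ 2 * (2 * α * g τ 0 + deriv (deriv (g τ)) 0) := by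
      rw [← this]; field_simp
    rw [e, hα]
    field_simp
    ring_nf
    simp only [Complex.I_pow_three]
    ring
  -- the defects of `D2` and of `E₂` under `S` cancel in this combination
  set F : ℂ → ℂ := fun τ => D2 τ - Q / 12 * (D0 τ * eis2 τ) with hF
  have dD0 := differentiableOn_qseries _ M D0 sD0
  have dD2 := differentiableOn_qseries _ M D2 sD2
  have dF : DifferentiableOn ℂ F UH :=
    dD2.sub ((dD0.mul differentiableOn_eis2).const_mul _)
  have tF : ∀ τ ∈ UH, F (-1 / τ) = τ ^ 2 * F τ := by
    intro τ hτ
    simp only [hF]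
    rw [tD2 τ hτ, tD0 τ hτ, eis2_neg_inv hτ]
    field_simp
    ring
  have h0 := integral_weight_two_eq_zero F dF tF
  have hmem : ∀ x : ℝ, rhoPt + x ∈ UH := fun x => by
    simpa [UH] using rhoPt_mem
  have hcont : ∀ f : ℂ → ℂ, DifferentiableOn ℂ f UH →
      Continuous fun x : ℝ => f (rhoPt + x) := fun f hf =>
    hf.continuousOn.comp_continuous (by fun_prop) hmem
  have i2 : ∫ x in (0 : ℝ)..1, D2 (rhoPt + x) = B₀ := by
    have h := hasSum_integral_qpow _ M rhoPt (fun x => D2 (rhoPt + x))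
      (fun x => sD2 _ (hmem x)) (fun _ => 1) continuous_const
    simp only [mul_one, integral_qpow, mul_ite, mul_zero] at h
    exact h.unique hB₀
  have i0 : ∫ x in (0 : ℝ)..1, D0 (rhoPt + x) * eis2 (rhoPt + x) = A₀ - 24 * A₁ := by
    have h := hasSum_integral_qpow _ M rhoPt (fun x => D0 (rhoPt + x))
      (fun x => sD0 _ (hmem x)) (fun x => eis2 (rhoPt + x)) (hcont _ differentiableOn_eis2)
    refine h.unique ?_
    convert! hA₀.sub (hA₁.mul_left 24) using 2 with p
    by_cases hp : a p = 0
    · simp [hp]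
    · rw [integral_qpow_mul_eis2 (hM p hp) rhoPt_mem]
      by_cases h1 : M p = 0
      · simp [h1]
      · by_cases h2 : M p = -1
        · simp [h2]; ring
        · simp [h1, h2]
  simp only [hF] at h0
  rw [intervalIntegral.integral_sub, intervalIntegral.integral_const_mul, i2, i0] at h0
  · linear_combination 12 * h0
  · exact (hcont _ dD2).intervalIntegrable _ _
  · exact ((hcont _ ((dD0.mul differentiableOn_eis2).const_mul (Q / 12)))).intervalIntegrable _ _

/-! ### Linear algebra of the lattice -/

namespace EvenLattice

variable {n : ℕ} (L : EvenLattice n)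

lemma bq_comm (x y : Fin n → ℚ) : L.bq x y = L.bq y x := by
  have hs : (L.G.map (Int.cast : ℤ → ℚ))ᵀ = L.G.map (Int.cast : ℤ → ℚ) := by
    rw [← Matrix.transpose_map, L.symm.eq]
  unfold bq
  rw [Matrix.dotProduct_mulVec, ← Matrix.mulVec_transpose, hs, dotProduct_comm]

lemma bq_add_right (x y z : Fin n → ℚ) : L.bq x (y + z) = L.bq x y + L.bq x z := by
  simp [bq, Matrix.mulVec_add]

lemma bq_smul_smul (c : ℚ) (x : Fin n → ℚ) : L.bq (c • x) (c • x) = c ^ 2 * L.bq x x := by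
  simp [bq, Matrix.mulVec_smul]
  ring

/-- Positive definiteness extends from `L` to `L ⊗ ℚ` by clearing denominators. -/
lemma bq_pos {x : Fin n → ℚ} (hx : x ≠ 0) : 0 < L.bq x x := by
  set N : ℕ := ∏ i, (x i).den with hN
  have hN0 : N ≠ 0 := Finset.prod_ne_zero_iff.mpr fun i _ => (x i).den_nz
  have hint : ∀ i, ∃ m : ℤ, (N : ℚ) * x i = m := by
    intro i
    obtain ⟨k, hk⟩ := Finset.dvd_prod_of_mem (fun j => (x j).den) (Finset.mem_univ i)
    refine ⟨k * (x i).num, ?_⟩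
    have h1 : (N : ℚ) = (x i).den * k := by rw [hN, hk]; push_cast; rfl
    have h2 : ((x i).den : ℚ) * x i = (x i).num := Rat.den_mul_eq_num _
    rw [h1]
    push_cast
    rw [← h2]
    ring
  choose y hy using hint
  have hNq : (N : ℚ) ≠ 0 := by exact_mod_cast hN0
  have hy0 : y ≠ 0 := by
    rintro rfl
    refine hx (funext fun i => ?_)
    simpa [hNq] using hy i
  have h := L.posdef y hy0
  have e : (N : ℚ) • x = fun i => (y i : ℚ) := funext fun i => by simpa using hy i
  have h3 : L.bq ((N : ℚ) • x) ((N : ℚ) • x) = ((y ⬝ᵥ (L.G *ᵥ y) : ℤ) : ℚ) := by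
    rw [e]
    simp [bq, dotProduct, Matrix.mulVec]
  rw [bq_smul_smul] at h3
  have h4 : (0 : ℚ) < (N : ℚ) ^ 2 * L.bq x x := by
    rw [h3]; exact_mod_cast h
  exact pos_of_mul_pos_right h4 (by positivity)

lemma bq_zero : L.bq 0 0 = 0 := by simp [bq]

lemma bq_nonneg (x : Fin n → ℚ) : 0 ≤ L.bq x x := by
  rcases eq_or_ne x 0 with rfl | hx
  · rw [bq_zero]
  · exact (L.bq_pos hx).le

lemma bc_cast_smul (w : ℂ) (x y : Fin n → ℚ) :
    L.bc (fun i => (x i : ℂ)) (fun i => w * (y i : ℂ)) = w * (L.bq x y : ℂ) := by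
  simp only [bc, bq, dotProduct, Matrix.mulVec, Matrix.map_apply]
  push_cast
  simp only [Finset.mul_sum]
  refine Finset.sum_congr rfl fun i _ => Finset.sum_congr rfl fun j _ => ?_
  ring

lemma bc_smul_smul (w : ℂ) (y : Fin n → ℚ) :
    L.bc (fun i => w * (y i : ℂ)) (fun i => w * (y i : ℂ)) = w ^ 2 * (L.bq y y : ℂ) := by
  simp only [bc, bq, dotProduct, Matrix.mulVec, Matrix.map_apply]
  push_cast
  simp only [Finset.mul_sum]
  refine Finset.sum_congr rfl fun i _ => Finset.sum_congr rfl fun j _ => ?_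
  ring

lemma isUnit_det : IsUnit (L.G.map (Int.cast : ℤ → ℚ)).det := by
  rw [isUnit_iff_ne_zero]
  intro h
  obtain ⟨x, hx, hx0⟩ := Matrix.exists_mulVec_eq_zero_iff.mpr h
  have := L.bq_pos hx
  rw [bq, hx0] at this
  simp at this

/-- If a finite weighted system of vectors has second-moment form proportional to the bilinear
form, the constant is found by taking the trace with respect to the inverse Gram matrix. -/
lemma trace_second_moment (T : Finset (Fin n → ℚ)) (f : (Fin n → ℚ) → ℂ) (K : ℂ)
    (h : ∀ v : Fin n → ℚ, ∑ l ∈ T, f l * (L.bq l v : ℂ) ^ 2 = (L.bq v v : ℂ) * K) :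
    ∑ l ∈ T, f l * (L.bq l l : ℂ) = n * K := by
  have hpol : ∀ x y : Fin n → ℚ,
      ∑ l ∈ T, f l * ((L.bq l x : ℂ) * (L.bq l y : ℂ)) = (L.bq x y : ℂ) * K := by
    intro x y
    have h1 := h (x + y)
    have e1 : ∑ l ∈ T, f l * (L.bq l (x + y) : ℂ) ^ 2 =
        ∑ l ∈ T, f l * (L.bq l x : ℂ) ^ 2 + ∑ l ∈ T, f l * (L.bq l y : ℂ) ^ 2 +
          2 * ∑ l ∈ T, f l * ((L.bq l x : ℂ) * (L.bq l y : ℂ)) := by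
      rw [Finset.mul_sum, ← Finset.sum_add_distrib, ← Finset.sum_add_distrib]
      refine Finset.sum_congr rfl fun l _ => ?_
      rw [bq_add_right]
      push_cast
      ring
    have e2 : L.bq (x + y) (x + y) = L.bq x x + L.bq y y + 2 * L.bq x y := by
      rw [bq_add_right, L.bq_comm _ x, L.bq_comm _ y, bq_add_right, bq_add_right, L.bq_comm y x]
      ring
    rw [e1, h x, h y, e2] at h1
    push_cast at h1
    linear_combination h1 / 2
  set A := L.G.map (Int.cast : ℤ → ℚ) with hA
  have hbasis : ∀ (l : Fin n → ℚ) (i : Fin n), L.bq l (Pi.single i 1) = (A *ᵥ l) i := by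
    intro l i
    rw [bq_comm, bq, single_one_dotProduct]
  have hl : ∀ l : Fin n → ℚ,
      ∑ i, ∑ j, A⁻¹ i j * (L.bq l (Pi.single i 1) * L.bq l (Pi.single j 1)) = L.bq l l := by
    intro l
    have : (A *ᵥ l) ⬝ᵥ (A⁻¹ *ᵥ (A *ᵥ l)) = L.bq l l := by
      rw [Matrix.mulVec_mulVec, Matrix.nonsing_inv_mul _ L.isUnit_det, Matrix.one_mulVec,
        dotProduct_comm, bq]
    rw [← this]
    simp only [hbasis]
    generalize A *ᵥ l = y
    simp only [dotProduct, Matrix.mulVec, Finset.mul_sum]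
    refine Finset.sum_congr rfl fun i _ => Finset.sum_congr rfl fun j _ => ?_
    ring
  have htr : ∑ i, ∑ j, A⁻¹ i j * L.bq (Pi.single i 1) (Pi.single j 1) = n := by
    have : (A⁻¹ * A).trace = n := by
      rw [Matrix.nonsing_inv_mul _ L.isUnit_det, Matrix.trace_one, Fintype.card_fin]
    rw [← this, Matrix.trace]
    refine Finset.sum_congr rfl fun i _ => ?_
    rw [Matrix.diag_apply, Matrix.mul_apply]
    refine Finset.sum_congr rfl fun j _ => ?_
    rw [hbasis, Matrix.mulVec_single_one]
    rfl
  calc ∑ l ∈ T, f l * (L.bq l l : ℂ)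
      = ∑ l ∈ T, ∑ i, ∑ j, (A⁻¹ i j : ℂ) * (f l *
          ((L.bq l (Pi.single i 1) : ℂ) * (L.bq l (Pi.single j 1) : ℂ))) := by
        refine Finset.sum_congr rfl fun l _ => ?_
        rw [← hl l]
        push_cast
        simp only [Finset.mul_sum]
        refine Finset.sum_congr rfl fun i _ => Finset.sum_congr rfl fun j _ => ?_
        ring
    _ = ∑ i, ∑ j, (A⁻¹ i j : ℂ) * ((L.bq (Pi.single i 1) (Pi.single j 1) : ℂ) * K) := by
        rw [Finset.sum_comm]
        refine Finset.sum_congr rfl fun i _ => ?_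
        rw [Finset.sum_comm]
        refine Finset.sum_congr rfl fun j _ => ?_
        rw [← Finset.mul_sum, hpol]
    _ = n * K := by
        have := congrArg (fun q : ℚ => (q : ℂ) * K) htr
        push_cast at this
        rw [← this]
        simp only [Finset.sum_mul]
        refine Finset.sum_congr rfl fun i _ => Finset.sum_congr rfl fun j _ => ?_
        ring

end EvenLattice

/-! ### The singular Fourier coefficients -/

section Singular

variable {n : ℕ} {L : EvenLattice n} {p : ℕ} {φ : WeakJacobiForm L 0} {β₀ : ℤ}

lemma PReflective.cases_of_coef_ne_zero (h : PReflective p φ β₀) {m : ℤ} {l : Fin n → ℚ}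
    (hc : φ.coef m l ≠ 0) :
    0 ≤ 2 * (m : ℚ) - L.bq l l ∨ (2 * (m : ℚ) - L.bq l l = -2 ∧ L.IsIntVec l) ∨
      2 * (m : ℚ) - L.bq l l = -(2 / (p : ℚ)) := by
  by_contra! hcon
  exact hc (h.2.2.2 m l hcon.1 (fun h' => hcon.2.1 h'.1 h'.2) hcon.2.2)

lemma two_div_prime (hp : p.Prime) : 0 < 2 / (p : ℚ) ∧ 2 / (p : ℚ) ≤ 1 := by
  have h2 : (2 : ℚ) ≤ p := by exact_mod_cast hp.two_le
  exact ⟨by positivity, (div_le_one (by linarith)).mpr h2⟩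

lemma PReflective.neg_one_le (hp : p.Prime) (h : PReflective p φ β₀) {m : ℤ} {l : Fin n → ℚ}
    (hc : φ.coef m l ≠ 0) : -1 ≤ m := by
  have hq := L.bq_nonneg l
  have h2 := two_div_prime hp
  have hm : (-2 : ℚ) < m := by
    rcases h.cases_of_coef_ne_zero hc with h1 | h1 | h1
    · linarith
    · linarith [h1.1]
    · linarith
  have : (-2 : ℤ) < m := by exact_mod_cast hm
  omega

/-- The `q⁻¹`-term is constant in the elliptic variable: `-2 - (l,l)` can equal `-2` only for
`l = 0`, and it is always less than `-2/p`. -/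
lemma PReflective.eq_zero_of_neg_one (hp : p.Prime) (h : PReflective p φ β₀) {l : Fin n → ℚ}
    (hc : φ.coef (-1) l ≠ 0) : l = 0 := by
  by_contra hl
  have hq := L.bq_pos hl
  have h2 := two_div_prime hp
  rcases h.cases_of_coef_ne_zero hc with h1 | h1 | h1
  · push_cast at h1; linarith
  · have := h1.1
    push_cast at this; linarith
  · push_cast at h1; linarith

lemma PReflective.coef_neg_one_zero (h : PReflective p φ β₀) : φ.coef (-1) 0 = β₀ :=
  h.1 (-1) 0 (by rw [L.bq_zero]; norm_num) fun _ => ⟨0, by simp⟩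

lemma PReflective.cases_zero (h : PReflective p φ β₀) {l : Fin n → ℚ}
    (hc : φ.coef 0 l ≠ 0) : l = 0 ∨ (L.bq l l = 2 ∧ L.IsIntVec l) ∨ L.bq l l = 2 / (p : ℚ) := by
  rcases h.cases_of_coef_ne_zero hc with h1 | h1 | h1
  · left
    by_contra hl
    have := L.bq_pos hl
    push_cast at h1; linarith
  · right; left
    refine ⟨?_, h1.2⟩
    have := h1.1
    push_cast at this; linarith
  · right; right
    push_cast at h1; linarith

/-- The weighted `q⁰`-term as a sum over all Fourier indices, the form used in `second_moment`. -/
lemma hasSum_coef_zero (w : (Fin n → ℚ) → ℂ) :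
    HasSum (fun q : ℤ × (Fin n → ℚ) => if q.1 = 0 then φ.coef q.1 q.2 * w q.2 else 0)
      (∑ l ∈ (φ.coef_finite 0).toFinset, φ.coef 0 l * w l) := by
  have h := hasSum_sum_of_ne_finset_zero
    (f := fun q : ℤ × (Fin n → ℚ) => if q.1 = 0 then φ.coef q.1 q.2 * w q.2 else 0)
    (s := (φ.coef_finite 0).toFinset.map ⟨fun l => ((0 : ℤ), l), Prod.mk_right_injective 0⟩)
    (L := .unconditional _) ?_
  · simpa using h
  · rintro ⟨m, l⟩ hml
    by_cases hm : m = 0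
    · subst hm
      have : φ.coef 0 l = 0 := by simpa using hml
      simp [this]
    · simp [hm]

lemma hasSum_coef_neg_one (hp : p.Prime) (h : PReflective p φ β₀) :
    HasSum (fun q : ℤ × (Fin n → ℚ) => if q.1 = -1 then φ.coef q.1 q.2 else 0) (β₀ : ℂ) := by
  have h1 := hasSum_single (L := .unconditional _)
    (f := fun q : ℤ × (Fin n → ℚ) => if q.1 = -1 then φ.coef q.1 q.2 else 0) (-1, 0) ?_
  · simpa [h.coef_neg_one_zero] using h1
  · rintro ⟨m, l⟩ hml
    by_cases hm : m = -1
    · subst hm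
      by_contra hc
      simp only [if_true] at hc
      exact hml (by rw [h.eq_zero_of_neg_one hp hc])
    · simp [hm]

/-- The quadratic-form identity satisfied by the `q⁰`-term, from `second_moment` applied to the
restriction of `φ` to the line spanned by `v`. -/
lemma second_moment_form (hp : p.Prime) (h : PReflective p φ β₀) (v : Fin n → ℚ) :
    12 * ∑ l ∈ (φ.coef_finite 0).toFinset, φ.coef 0 l * (L.bq l v : ℂ) ^ 2 =
      (L.bq v v : ℂ) * (∑ l ∈ (φ.coef_finite 0).toFinset, φ.coef 0 l - 24 * β₀) := by
  refine second_moment (fun q : ℤ × (Fin n → ℚ) => φ.coef q.1 q.2) (fun q => q.1)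
    (fun q => (L.bq q.2 v : ℝ)) (fun τ w => φ.toFun τ fun i => w * (v i : ℂ)) _ _ _ _
    ?_ ?_ ?_ ?_ ?_ ?_
  · intro τ hτ w
    convert! φ.expansion τ hτ (fun i => w * (v i : ℂ)) using 2 with q
    rw [L.bc_cast_smul]
    push_cast
    rfl
  · rintro ⟨m, l⟩ hc
    exact h.neg_one_le hp hc
  · intro τ hτ w
    have hm := φ.modular 0 (-1) 1 0 (by norm_num) τ hτ (fun i => w * (v i : ℂ))
    rw [L.bc_smul_smul] at hm
    simp only [Int.cast_zero, Int.cast_one, Int.cast_neg, zero_mul, zero_add, one_mul, add_zero,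
      zpow_zero, mul_one] at hm
    convert! hm using 2
    · funext i
      ring
    · congr 1
      ring
  · simpa using hasSum_coef_zero (φ := φ) fun _ => 1
  · exact hasSum_coef_neg_one hp h
  · simpa using hasSum_coef_zero (φ := φ) fun l => (L.bq l v : ℂ) ^ 2

/-- The contribution of norm `2`: `φ` has coefficient `β₀` at every `2`-root, and coefficient zero
at every other dual vector of norm `2`. -/
lemma sum_roots (hp : p.Prime) (h : PReflective p φ β₀) :
    ∑ l ∈ (φ.coef_finite 0).toFinset, (if L.bq l l = 2 then φ.coef 0 l else 0) =
      β₀ * (L.rootCount : ℂ) := by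
  have h2 := two_div_prime hp
  have hβ : ∀ l, L.IsIntVec l → L.bq l l = 2 → φ.coef 0 l = β₀ := fun l hl hq =>
    h.1 0 l (by rw [hq]; norm_num) hl
  have hint : ∀ l, φ.coef 0 l ≠ 0 → L.bq l l = 2 → L.IsIntVec l := by
    intro l hc hq
    rcases h.cases_zero hc with h1 | h1 | h1
    · rw [h1, L.bq_zero] at hq; norm_num at hq
    · exact h1.2
    · linarith
  rw [← Finset.sum_filter]
  have hs : ∀ l ∈ (φ.coef_finite 0).toFinset.filter (fun l => L.bq l l = 2),
      φ.coef 0 l = β₀ := by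
    intro l hl
    simp only [Finset.mem_filter, Set.Finite.mem_toFinset, Set.mem_ofPred_eq] at hl
    exact hβ l (hint l hl.1 hl.2) hl.2
  rw [Finset.sum_congr rfl hs, Finset.sum_const, nsmul_eq_mul, mul_comm]
  -- for `β₀ = 0` the roots need not lie in the support, but both sides vanish
  by_cases hb : (β₀ : ℂ) = 0
  · simp [hb]
  · rw [EvenLattice.rootCount, Nat.subtype_card]
    intro l
    simp only [Finset.mem_filter, Set.Finite.mem_toFinset, Set.mem_ofPred_eq]
    exact ⟨fun hl => ⟨hint l hl.1 hl.2, hl.2⟩, fun hl => ⟨by rwa [hβ l hl.1 hl.2], hl.2⟩⟩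

/-- The contribution of norm `2/p`, with the support condition replaced by membership in `L^∨`. -/
lemma sum_short :
    ∑ l ∈ (φ.coef_finite 0).toFinset, (if L.bq l l = 2 / (p : ℚ) then φ.coef 0 l else 0) =
      ∑ᶠ s ∈ {s : Fin n → ℚ | L.InDual s ∧ L.bq s s = 2 / (p : ℚ)}, φ.coef 0 s := by
  rw [← Finset.sum_filter]
  symm
  apply finsum_mem_eq_sum_of_inter_support_eq
  ext l
  simp only [Set.mem_inter_iff, Set.mem_ofPred_eq, Function.mem_support, Finset.coe_filter,
    Set.Finite.mem_toFinset]
  exact ⟨fun hl => ⟨⟨hl.2, hl.1.2⟩, hl.2⟩, fun hl => ⟨⟨φ.coef_dual 0 l hl.2, hl.1.2⟩, hl.2⟩⟩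

/-- A radially weighted sum over the `q⁰`-term splits over the three possible norms
`0`, `2`, `2/p`. -/
lemma sum_split (hp : p.Prime) (h : PReflective p φ β₀) (w : ℚ → ℂ) :
    ∑ l ∈ (φ.coef_finite 0).toFinset, φ.coef 0 l * w (L.bq l l) =
      φ.coef 0 0 * w 0 + β₀ * (L.rootCount : ℂ) * w 2 +
        (∑ᶠ s ∈ {s : Fin n → ℚ | L.InDual s ∧ L.bq s s = 2 / (p : ℚ)}, φ.coef 0 s) *
          w (2 / (p : ℚ)) := by
  have h2 := two_div_prime hp
  have h0 : ∑ l ∈ (φ.coef_finite 0).toFinset, (if l = 0 then φ.coef 0 l else 0) = φ.coef 0 0 := by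
    rw [Finset.sum_ite_eq']
    simp only [Set.Finite.mem_toFinset, Set.mem_ofPred_eq, ite_not]
    split_ifs with hz
    · exact hz.symm
    · rfl
  rw [← h0, ← sum_roots hp h, ← sum_short, Finset.sum_mul, Finset.sum_mul, Finset.sum_mul,
    ← Finset.sum_add_distrib, ← Finset.sum_add_distrib]
  refine Finset.sum_congr rfl fun l hl => ?_
  have hc : φ.coef 0 l ≠ 0 := by simpa using hl
  have hzero : L.bq l l ≠ 0 → l ≠ 0 := fun hq hl0 => hq (by rw [hl0, L.bq_zero])
  rcases h.cases_zero hc with h1 | h1 | h1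
  · subst h1
    rw [L.bq_zero, if_pos rfl, if_neg (by norm_num), if_neg h2.1.ne]
    ring
  · rw [h1.1] at hzero ⊢
    rw [if_neg (hzero (by norm_num)), if_pos rfl, if_neg (by linarith)]
    ring
  · rw [h1] at hzero ⊢
    rw [if_neg (hzero h2.1.ne'), if_neg (by linarith), if_pos rfl]
    ring

end Singular

/-- the weight formula for reflective modular forms on lattices of prime level
`p`, in its Jacobi-form formulation: `f(0,0) = 2k` where
`k = β₀·[12 + |R(L)|·(12/n₀ − 1/2)] + (12/(p·n₀) − 1/2)·Σ_{s ∈ L^∨, (s,s)=2/p} f(0,s)`. -/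
theorem prime_level_weight_formula {n₀ : ℕ} (hn : 1 ≤ n₀) (p : ℕ) (hp : p.Prime)
    (L : EvenLattice n₀) (hlev : HasLevel L p) (β₀ : ℤ) (φ : WeakJacobiForm L 0)
    (h : PReflective p φ β₀) :
    φ.coef 0 0 =
      2 * ((β₀ : ℂ) * (12 + (L.rootCount : ℂ) * (12 / (n₀ : ℂ) - 1 / 2)) +
        (12 / ((p : ℂ) * (n₀ : ℂ)) - 1 / 2) *
          ∑ᶠ s ∈ {s : Fin n₀ → ℚ | L.InDual s ∧ L.bq s s = 2 / (p : ℚ)},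
            φ.coef 0 s) := by
  -- `∑ f(0,l) (l,l) = n₀ (∑ f(0,l) - 24 β₀) / 12`; the rest rewrites both sums by norm
  have htrace := L.trace_second_moment (φ.coef_finite 0).toFinset (φ.coef 0)
    ((∑ l ∈ (φ.coef_finite 0).toFinset, φ.coef 0 l - 24 * β₀) / 12) fun v => by
      linear_combination (1 / 12 : ℂ) * second_moment_form hp h v
  have hmass := sum_split hp h fun _ => 1
  have hnorm := sum_split hp h fun q => (q : ℂ)
  simp only [mul_one] at hmass
  rw [htrace, hmass] at hnorm
  push_cast at hnorm
  have hn0 : (n₀ : ℂ) ≠ 0 := by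
    exact_mod_cast (by omega : n₀ ≠ 0)
  have hp0 : (p : ℂ) ≠ 0 := by exact_mod_cast hp.ne_zero
  field_simp at hnorm ⊢
  linear_combination hnorm
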